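/- Let p be a prime, r a positive integer, n = p^r, m a divisor of n−1, A the unique subgroup of order m of 𝔽_{p^r}ˣ, κ := (n−1)/m, x a generator of 𝔽_{p^r}ˣ, ω = e^{2πi/p}, Tr the field trace of 𝔽_{p^r} over 𝔽_p, and for z ∈ 𝔽_{p^r} set c_z := (1/m) Σ_{a ∈ A} ω^{Tr(z a)}. Let γ = e^{2πi/κ} and for d = 0, 1, ..., κ−1 define w_{d+1} := Σ_{t=0}^{κ−1} γ^{t d} c_{x^t}. Then w_1 = −1/m, and |w_{d+1}|² = (1/m)(κ + 1/m) for every d = 1, ..., κ−1. -/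

import Mathlib

/-- The normalized character sum `c_z = (1/m) ∑_{a ∈ A} ω^{Tr(z·a)}` with `ω = e^{2πi/p}`,
for a subgroup `A` of order `m` of the group of units of the finite field `F` of
characteristic `p`, `Tr` being the field trace to `𝔽_p`. -/
noncomputable def normCharSum (p : ℕ) (F : Type*) [Field F] [Algebra (ZMod p) F]
    (A : Subgroup Fˣ) [Fintype A] (m : ℕ) (z : F) : ℂ :=
  (1 / (m : ℂ)) * ∑ a : A, Complex.exp (2 * Real.pi * Complex.I / p) ^
      (Algebra.trace (ZMod p) F (z * ((a : Fˣ) : F))).val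

/-- The standard additive character of `F`, through the trace. -/
noncomputable def trChar (p : ℕ) [NeZero p] (F : Type*) [Field F] [Algebra (ZMod p) F] :
    AddChar F ℂ :=
  (ZMod.stdAddChar (N := p)).compAddMonoidHom (Algebra.trace (ZMod p) F).toAddMonoidHom

lemma trChar_apply (p : ℕ) [NeZero p] (F : Type*) [Field F] [Algebra (ZMod p) F] (z : F) :
    trChar p F z = Complex.exp (2 * Real.pi * Complex.I / p) ^ (Algebra.trace (ZMod p) F z).val := by
  have : trChar p F z = ZMod.stdAddChar (N := p) (Algebra.trace (ZMod p) F z) := rfl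
  rw [this, ZMod.stdAddChar_apply, ZMod.toCircle_apply, ← Complex.exp_nat_mul]
  congr 1
  ring

lemma trChar_ne_one (p : ℕ) [Fact p.Prime] (F : Type*) [Field F] [Fintype F]
    [Algebra (ZMod p) F] : trChar p F ≠ 1 := by
  intro h
  obtain ⟨z, hz⟩ := Algebra.trace_surjective (ZMod p) F 1
  have h1 : ZMod.stdAddChar (N := p) (Algebra.trace (ZMod p) F z) = 1 := by
    have : trChar p F z = 1 := by rw [h]; rfl
    exact this
  rw [hz] at h1
  have h2 : ZMod.stdAddChar (N := p) 1 = ZMod.stdAddChar (N := p) 0 := by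
    rw [h1, AddChar.map_zero_eq_one]
  exact one_ne_zero (ZMod.injective_stdAddChar h2)

/-- Divisibility of exponents: `x ^ k ∈ A` forces `κ ∣ k`. -/
lemma dvd_of_zpow_mem {G : Type*} [Group G] (A : Subgroup G) (m κ : ℕ) (hm : 0 < m)
    (hA : Nat.card A = m) (x : G) (hx : orderOf x = m * κ) (k : ℤ) (hk : x ^ k ∈ A) :
    (κ : ℤ) ∣ k := by
  have h1 : (x ^ k) ^ m = 1 := by
    have := pow_card_eq_one' (x := (⟨x ^ k, hk⟩ : A))
    rw [hA] at this
    simpa using congrArg Subtype.val this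
  rw [← zpow_natCast, ← zpow_mul] at h1
  have h2 := orderOf_dvd_iff_zpow_eq_one.mpr h1
  rw [hx, Nat.cast_mul, mul_comm k] at h2
  exact (mul_dvd_mul_iff_left (by exact_mod_cast hm.ne')).mp h2

/-- The discrete Fourier transform is a normalized Gauss sum. -/
lemma dft_eq_gaussSum (p : ℕ) [Fact p.Prime]
    (F : Type*) [Field F] [Fintype F] [DecidableEq F] [Algebra (ZMod p) F]
    (m κ : ℕ) (hm : 0 < m) (hκ : m * κ = Fintype.card Fˣ)
    (A : Subgroup Fˣ) [Fintype A] (hA : Nat.card A = m)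
    (x : Fˣ) (hx : orderOf x = m * κ) (hg : ∀ y, y ∈ Subgroup.zpowers x)
    (χ : MulChar F ℂ) (ζ : ℂ) (hζ : ζ ^ κ = 1) (hχ : χ x = ζ) :
    ∑ t ∈ Finset.range κ, ζ ^ t * normCharSum p F A m ((x : F) ^ t)
      = (1 / (m : ℂ)) * gaussSum χ (trChar p F) := by
  have hχA : ∀ a ∈ A, χ (a : F) = 1 := by
    intro a ha
    obtain ⟨k, rfl⟩ := (mem_powers_iff_mem_zpowers.mpr (hg a))
    simp only at ha ⊢
    have := dvd_of_zpow_mem A m κ hm hA x hx k (by simpa using ha)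
    obtain ⟨j, rfl⟩ := Int.natCast_dvd_natCast.mp this
    rw [Units.val_pow_eq_pow_val, map_pow, hχ, pow_mul, hζ, one_pow]
  have hbij : Function.Bijective (fun q : Fin κ × A => x ^ (q.1 : ℕ) * (q.2 : Fˣ)) := by
    rw [Fintype.bijective_iff_injective_and_card]
    constructor
    · rintro ⟨s, a⟩ ⟨t, b⟩ h
      simp only at h
      have hmem : x ^ ((s : ℤ) - (t : ℤ)) ∈ A := by
        have : x ^ ((s : ℤ) - (t : ℤ)) = (b : Fˣ) * (a : Fˣ)⁻¹ := by
          rw [zpow_sub, zpow_natCast, zpow_natCast, eq_mul_inv_iff_mul_eq, mul_right_comm, h]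
          rw [mul_right_comm, mul_inv_cancel, one_mul]
        rw [this]
        exact A.mul_mem b.2 (A.inv_mem a.2)
      have hd := dvd_of_zpow_mem A m κ hm hA x hx _ hmem
      have hst : (s : ℕ) = t := by
        have h0 := Int.eq_zero_of_abs_lt_dvd hd (by
          have := s.2; have := t.2
          rw [abs_lt]; constructor <;> omega)
        omega
      have hst' : s = t := Fin.ext hst
      subst hst'
      have := mul_left_cancel h
      simp [Subtype.ext this]
    · rw [Fintype.card_prod, Fintype.card_fin, ← Nat.card_eq_fintype_card (α := A), hA, mul_comm, hκ]
  have hunits : gaussSum χ (trChar p F) = ∑ u : Fˣ, χ (u : F) * trChar p F (u : F) := by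
    unfold gaussSum
    rw [← Finset.sum_subset (Finset.subset_univ (Finset.univ.image (fun u : Fˣ => (u : F))))]
    · rw [Finset.sum_image (fun a _ b _ h => Units.ext h)]
    · intro a _ ha
      have : ¬ IsUnit a := by
        rintro ⟨u, rfl⟩
        exact ha (Finset.mem_image_of_mem _ (Finset.mem_univ u))
      rw [χ.map_nonunit this, zero_mul]
  rw [hunits, ← hbij.sum_comp (fun u : Fˣ => χ (u : F) * trChar p F (u : F)), Fintype.sum_prod_type,
    ← Fin.sum_univ_eq_sum_range (fun t => ζ ^ t * normCharSum p F A m ((x : F) ^ t)), Finset.mul_sum]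
  refine Finset.sum_congr rfl fun t _ => ?_
  rw [normCharSum, mul_left_comm, Finset.mul_sum]
  congr 1
  refine Finset.sum_congr rfl fun a _ => ?_
  rw [← trChar_apply]
  simp [hχA a a.2, hχ]

/-- Lemma 10. With `x` a generator of `𝔽_{p^r}ˣ`, `A` the unique subgroup of order `m`,
`κ = (p^r - 1)/m`, `c_z = (1/m)∑_{a ∈ A} ω^{Tr(za)}`, `γ = e^{2πi/κ}`, and
`w_{d+1} = ∑_{t=0}^{κ-1} γ^{td} c_{x^t}`: one has `w₁ = -1/m` and
`|w_{d+1}|² = (1/m)(κ + 1/m)` for `d = 1, …, κ-1`. -/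
theorem dft_of_normalized_char_sums (p r : ℕ) [Fact p.Prime] (hr : 0 < r)
    (F : Type*) [Field F] [Fintype F] [Algebra (ZMod p) F]
    (hF : Fintype.card F = p ^ r)
    (m κ : ℕ) (hκ : m * κ = p ^ r - 1)
    (A : Subgroup Fˣ) [Fintype A] (hA : Nat.card A = m)
    (x : Fˣ) (hx : Subgroup.zpowers x = ⊤) :
    (∑ t ∈ Finset.range κ, normCharSum p F A m (((x : F)) ^ t) = -(1 / (m : ℂ))) ∧
    (∀ d : ℕ, 1 ≤ d → d ≤ κ - 1 →
      ‖∑ t ∈ Finset.range κ,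
          Complex.exp (2 * Real.pi * Complex.I / κ) ^ (t * d) *
            normCharSum p F A m (((x : F)) ^ t)‖ ^ 2
        = (1 / (m : ℝ)) * ((κ : ℝ) + 1 / (m : ℝ))) := by
  classical
  have hm : 0 < m := by
    rw [← hA]; exact Nat.card_pos
  have hmC : (m : ℝ) ≠ 0 := by exact_mod_cast hm.ne'
  have hpos : 0 < p ^ r := pow_pos (Fact.out : p.Prime).pos r
  have hcard : m * κ = Fintype.card Fˣ := by
    rw [Fintype.card_units, hF, hκ]
  have hg : ∀ y, y ∈ Subgroup.zpowers x := fun y => by rw [hx]; trivial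
  have hord : orderOf x = m * κ := by
    rw [hcard, orderOf_eq_card_of_forall_mem_zpowers hg, Nat.card_eq_fintype_card]
  have hψ := trChar_ne_one p F
  have hκ0 : κ ≠ 0 := by
    rintro rfl
    have := Fintype.card_pos (α := Fˣ)
    omega
  constructor
  · have := dft_eq_gaussSum p F m κ hm hcard A hA x hord hg 1 1 (one_pow _)
      (MulChar.one_apply_coe x)
    rw [gaussSum_one_left hψ] at this
    simpa using this
  · intro d hd1 hd2
    have hprim := Complex.isPrimitiveRoot_exp κ hκ0
    set γ := Complex.exp (2 * Real.pi * Complex.I / κ) with hγ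
    have hζ : (γ ^ d) ^ κ = 1 := by rw [← pow_mul, mul_comm, pow_mul, hprim.pow_eq_one, one_pow]
    have hζ1 : γ ^ d ≠ 1 := hprim.pow_ne_one_of_pos_of_lt (by omega) (by omega)
    have hγ0 : γ ^ d ≠ 0 := pow_ne_zero _ (Complex.exp_ne_zero _)
    have hroot : Units.mk0 (γ ^ d) hγ0 ∈ rootsOfUnity (Fintype.card Fˣ) ℂ := by
      rw [mem_rootsOfUnity]
      ext
      rw [← hcard, mul_comm, pow_mul]
      simp [hζ]
    have hχ := MulChar.ofRootOfUnity_spec hroot hg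
    set χ := MulChar.ofRootOfUnity hroot hg
    rw [Units.val_mk0] at hχ
    have hχ1 : χ ≠ 1 := by
      intro h
      rw [h, MulChar.one_apply_coe] at hχ
      exact hζ1 hχ.symm
    have key := dft_eq_gaussSum p F m κ hm hcard A hA x hord hg χ (γ ^ d) hζ hχ
    have hG : ‖gaussSum χ (trChar p F)‖ ^ 2 = (p ^ r : ℕ) := by
      have h1 := gaussSum_mul_gaussSum_eq_card hχ1 (AddChar.IsPrimitive.of_ne_one hψ)
      rw [← star_gaussSum_eq, hF] at h1
      have h2 := Complex.mul_conj' (gaussSum χ (trChar p F))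
      rw [starRingEnd_apply, h1] at h2
      exact_mod_cast h2.symm
    have hsum : ∑ t ∈ Finset.range κ, γ ^ (t * d) * normCharSum p F A m ((x : F) ^ t)
        = (1 / (m : ℂ)) * gaussSum χ (trChar p F) := by
      rw [← key]
      refine Finset.sum_congr rfl fun t _ => ?_
      rw [← pow_mul, mul_comm d]
    rw [hsum, norm_mul, mul_pow, hG]
    have hn : p ^ r = m * κ + 1 := by omega
    rw [hn]
    simp only [norm_div, norm_one, Complex.norm_natCast]
    push_cast
    field_simp
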